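/- Let A be a unique representation basis of the integers and let n be a positive integer. For each integer ℓ with 1 ≤ ℓ ≤ n, let N_ℓ be the number of elements of A in the interval ((ℓ−1)n, ℓn]. Then ∑_{1 ≤ ℓ ≤ n, N_ℓ ≥ 2} binom(N_ℓ, 2) < n. -/

import Mathlib

open Filter Set

/-- `repCount A n` is the number of representations of `n` as `a + a'` with
`a ≤ a'` and `a, a' ∈ A`. -/
noncomputable def repCount (A : Set ℤ) (n : ℤ) : ℕ :=
  {p : ℤ × ℤ | p.1 ∈ A ∧ p.2 ∈ A ∧ p.1 ≤ p.2 ∧ p.1 + p.2 = n}.ncard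

/-- `A` is a unique representation basis of `ℤ` if `r_A(n) = 1` for all `n`. -/
def IsUniqueRepBasis (A : Set ℤ) : Prop := ∀ n : ℤ, repCount A n = 1

/-- `countIn A y x` is the number of elements of `A` in the real interval `[y, x]`. -/
noncomputable def countIn (A : Set ℤ) (y x : ℝ) : ℕ :=
  {a : ℤ | a ∈ A ∧ y ≤ (a : ℝ) ∧ (a : ℝ) ≤ x}.ncard

/-!
A unique representation basis is a Sidon set, so distinct pairs `x < y` of its elements have
distinct differences `y - x`. Pairs inside disjoint blocks of diameter less than `n` are distinct
and their differences lie in `{1, …, n - 1}`, so there are fewer than `n` of them.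
-/

open scoped Finset Function

/-- A Sidon set: a sum of two elements of `A` determines its two summands up to order. The summands
may coincide. -/
def IsSidon {M : Type*} [Add M] (A : Set M) : Prop :=
  ∀ ⦃a⦄, a ∈ A → ∀ ⦃b⦄, b ∈ A → ∀ ⦃c⦄, c ∈ A → ∀ ⦃d⦄, d ∈ A →
    a + b = c + d → (a = c ∧ b = d) ∨ (a = d ∧ b = c)

theorem IsSidon.injOn_sub_offDiag {G : Type*} [AddCommGroup G] {A : Set G} (hA : IsSidon A) :
    A.offDiag.InjOn fun p ↦ p.2 - p.1 := by
  rintro ⟨x, y⟩ ⟨hx, hy, hxy⟩ ⟨u, v⟩ ⟨hu, hv, -⟩ (h : y - x = v - u)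
  have hsum : y + u = v + x := sub_eq_sub_iff_add_eq_add.1 h
  rcases hA hy hu hv hx hsum with ⟨hyv, hux⟩ | ⟨hyx, -⟩
  · exact Prod.ext hux.symm hyv
  · exact absurd hyx.symm hxy

theorem IsSidon.sum_card_choose_two_le {ι G : Type*} [AddCommGroup G] [LinearOrder G] {A : Set G}
    (hA : IsSidon A) {s : Finset ι} {B : ι → Finset G} (hBA : ∀ i ∈ s, ↑(B i) ⊆ A)
    (hB : (s : Set ι).PairwiseDisjoint B) {D : Finset G}
    (hD : ∀ i ∈ s, ∀ x ∈ B i, ∀ y ∈ B i, x < y → y - x ∈ D) :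
    ∑ i ∈ s, (#(B i)).choose 2 ≤ #D := by
  let pairs (i : ι) : Finset (G × G) := {p ∈ B i ×ˢ B i | p.1 < p.2}
  have mem_pairs {i : ι} {p : G × G} : p ∈ pairs i ↔ (p.1 ∈ B i ∧ p.2 ∈ B i) ∧ p.1 < p.2 := by
    simp only [pairs, Finset.mem_filter, Finset.mem_product]
  have hpairs : (s : Set ι).PairwiseDisjoint pairs := fun i hi j hj hij ↦
    Finset.disjoint_left.2 fun _ hpi hpj ↦
      Finset.disjoint_left.1 (hB hi hj hij) (mem_pairs.1 hpi).1.1 (mem_pairs.1 hpj).1.1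
  calc ∑ i ∈ s, (#(B i)).choose 2 = ∑ i ∈ s, #(pairs i) := by
        simp only [pairs, Finset.card_product_filter_lt]
    _ = #(s.biUnion pairs) := (Finset.card_biUnion hpairs).symm
    _ ≤ #D := Finset.card_le_card_of_injOn (fun p ↦ p.2 - p.1) ?_ (hA.injOn_sub_offDiag.mono ?_)
  all_goals
    intro p hp
    obtain ⟨i, hi, hpi⟩ := Finset.mem_biUnion.1 hp
    obtain ⟨⟨h₁, h₂⟩, hlt⟩ := mem_pairs.1 hpi
  · exact hD i hi p.1 h₁ p.2 h₂ hlt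
  · exact ⟨hBA i hi h₁, hBA i hi h₂, hlt.ne⟩

theorem IsUniqueRepBasis.isSidon {A : Set ℤ} (hA : IsUniqueRepBasis A) : IsSidon A := by
  intro a ha b hb c hc d hd h
  obtain ⟨p, hp⟩ := Set.ncard_eq_one.1 (hA (a + b))
  have min_max_eq {x y : ℤ} (hx : x ∈ A) (hy : y ∈ A) (hxy : x + y = a + b) :
      (min x y, max x y) = p := by
    rw [← Set.mem_singleton_iff, ← hp]
    exact ⟨min_rec' (· ∈ A) hx hy, max_rec' (· ∈ A) hx hy, min_le_max, (min_add_max x y).trans hxy⟩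
  have hmax : max a b = max c d :=
    congrArg Prod.snd ((min_max_eq ha hb rfl).trans (min_max_eq hc hd h.symm).symm)
  omega

theorem finite_of_forall_sub_lt {G : Type*} [AddCommGroup G] [PartialOrder G]
    [IsOrderedAddMonoid G] [LocallyFiniteOrder G] {S : Set G} {r : G}
    (hS : ∀ x ∈ S, ∀ y ∈ S, y - x < r) : S.Finite := by
  obtain rfl | ⟨x, hx⟩ := S.eq_empty_or_nonempty
  · exact Set.finite_empty
  · exact (Set.finite_Ioo (x - r) (x + r)).subset fun y hy ↦
      ⟨sub_lt_comm.1 (hS y hy x hx), sub_lt_iff_lt_add'.1 (hS x hx y hy)⟩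

theorem pairwise_disjoint_Ioc_sub_one_mul {R : Type*} [Ring R] [PartialOrder R] [IsOrderedRing R]
    {r : R} (hr : 0 ≤ r) :
    Pairwise (Disjoint on fun k : ℤ ↦ Ioc (((k : R) - 1) * r) (k * r)) := by
  have hmono : Monotone fun k : ℤ ↦ (k : R) * r :=
    fun _ _ hkl ↦ mul_le_mul_of_nonneg_right (Int.cast_mono hkl) hr
  simpa only [Order.pred_eq_sub_one, Int.cast_sub, Int.cast_one]
    using hmono.pairwise_disjoint_on_Ioc_pred

theorem urb_sum_choose_lt_general {ι : Type*} {A : Set ℤ} (hA : IsSidon A) {n : ℕ} (hn : 0 < n)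
    {s : Finset ι} {B : ι → Set ℤ} (hB : (s : Set ι).PairwiseDisjoint B)
    (hdiam : ∀ i ∈ s, ∀ x ∈ B i, ∀ y ∈ B i, y - x < n) :
    ∑ i ∈ s, (A ∩ B i).ncard.choose 2 < n := by
  have hfin (i : ι) (hi : i ∈ s) : (A ∩ B i).Finite :=
    (finite_of_forall_sub_lt (hdiam i hi)).inter_of_right A
  choose! F hF using fun i hi ↦ (hfin i hi).exists_finset_coe
  have hFA : ∀ i ∈ s, ↑(F i) ⊆ A := fun i hi ↦ (hF i hi).trans_subset inter_subset_left
  have hFB : ∀ i ∈ s, ↑(F i) ⊆ B i := fun i hi ↦ (hF i hi).trans_subset inter_subset_right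
  have hdisj : (s : Set ι).PairwiseDisjoint F := fun i hi j hj hij ↦
    Finset.disjoint_coe.1 ((hB hi hj hij).mono (hFB i hi) (hFB j hj))
  have hdiff : ∀ i ∈ s, ∀ x ∈ F i, ∀ y ∈ F i, x < y → y - x ∈ Finset.Ioo (0 : ℤ) n :=
    fun i hi x hx y hy hxy ↦
      Finset.mem_Ioo.2 ⟨sub_pos.2 hxy, hdiam i hi x (hFB i hi hx) y (hFB i hi hy)⟩
  calc ∑ i ∈ s, (A ∩ B i).ncard.choose 2 = ∑ i ∈ s, (#(F i)).choose 2 :=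
        Finset.sum_congr rfl fun i hi ↦ by rw [← hF i hi, Set.ncard_coe_finset]
    _ ≤ #(Finset.Ioo (0 : ℤ) n) := hA.sum_card_choose_two_le hFA hdisj hdiff
    _ < n := by rw [Int.card_Ioo]; lia

/-- For a unique representation basis, the number of pairs of elements of `A`
within the blocks `((ℓ-1)n, ℓn]`, `1 ≤ ℓ ≤ n`, is less than `n`. -/
theorem urb_sum_choose_lt (A : Set ℤ) (hA : IsUniqueRepBasis A) (n : ℕ) (hn : 0 < n)
    (N : ℕ → ℕ)
    (hN : ∀ ℓ : ℕ, N ℓ = {a : ℤ | a ∈ A ∧ ((ℓ : ℤ) - 1) * n < a ∧ a ≤ (ℓ : ℤ) * n}.ncard) :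
    ∑ ℓ ∈ (Finset.Icc 1 n).filter (fun ℓ => 2 ≤ N ℓ), Nat.choose (N ℓ) 2 < n := by
  obtain rfl := funext hN
  have hdisj := (pairwise_disjoint_Ioc_sub_one_mul (Int.natCast_nonneg n)).comp_of_injective
    (Nat.cast_injective (R := ℤ))
  exact urb_sum_choose_lt_general hA.isSidon hn (hdisj.set_pairwise _)
    fun ℓ _ x hx y hy ↦ by linarith [hx.1, hy.2]
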